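/- Let X_0, …, X_m be skew block matrices over F such that for every i and every block position (α,β) with α > m−i or β > i+1, the (α,β)-th block of X_i equals the (α,β)-th block of D_i (the blocks of X_i at positions with α ≤ m−i and β ≤ i+1 are arbitrary). If Bᵗ · (Σ_{i=0}^{m} X_i N^i) lies in N^m · M_r(F[N]), then Σ_{i=0}^{m} X_i N^i = B̄. (Lemma 3.33 of the paper.) -/

import Mathlib

open Matrix

/-- The index set appearing in condition (3.12) of the paper. -/
def siegelIdxSet (m : ℕ) (k : ℕ → ℕ) (u : ℕ) : Set (ℕ × ℕ × ℕ) :=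
  {p | u ≤ p.1 ∧ p.1 ≤ m - 1 ∧ p.1 + 2 ≤ p.2.1 ∧ p.2.1 ≤ m + 1 ∧ 1 ≤ p.2.2 ∧ p.2.2 ≤ k p.2.1}

/-- Condition (3.12) of the paper. -/
def IsSiegelBasis (F : Type*) [Field F] {V : Type*} [AddCommGroup V] [Module F V]
    (m : ℕ) (k : ℕ → ℕ) (N : Module.End F V) (l : ℕ → ℕ → V) : Prop :=
  ∀ u : ℕ, u < m →
    LinearIndependent F
      (fun p : siegelIdxSet m k u => (N ^ p.val.1) (l p.val.2.1 p.val.2.2)) ∧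
    Submodule.span F
        ((fun p : ℕ × ℕ × ℕ => (N ^ p.1) (l p.2.1 p.2.2)) '' siegelIdxSet m k u) =
      LinearMap.range (N ^ u)

/-- The matrices `P_{u,v,y,z}` (entries `P u v y z i j`) satisfy the defining relation
(3.20) of the paper. -/
def SatisfiesP {F : Type*} [Field F] {V : Type*} [AddCommGroup V] [Module F V]
    (m : ℕ) (k : ℕ → ℕ) (N : Module.End F V) (l : ℕ → ℕ → V)
    (P : ℕ → ℕ → ℕ → ℕ → ℕ → ℕ → F) : Prop :=
  ∀ u ∈ Finset.Icc 1 (m + 1), ∀ v ∈ Finset.Icc 0 (m - 1), ∀ i ∈ Finset.Icc 1 (k u),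
    (N ^ v) (l u i) =
      -∑ z ∈ Finset.Icc v (m - 1), ∑ y ∈ Finset.Icc (z + 2) (m + 1),
        ∑ j ∈ Finset.Icc 1 (k y), P u v y z i j • (N ^ z) (l y j)

/-- Row index Finset of a skew block matrix: pairs `⟨α, i⟩` with `1 ≤ α ≤ m+1`,
`1 ≤ i ≤ k α`. -/
def blockIdx (m : ℕ) (k : ℕ → ℕ) : Finset ((_ : ℕ) × ℕ) :=
  (Finset.Icc 1 (m + 1)).sigma fun u => Finset.Icc 1 (k u)

/-- Column index Finset of a skew block matrix: pairs `⟨β, j⟩` with `1 ≤ β ≤ m+1`,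
`1 ≤ j ≤ k (m+2-β)`. -/
def dualBlockIdx (m : ℕ) (k : ℕ → ℕ) : Finset ((_ : ℕ) × ℕ) :=
  (Finset.Icc 1 (m + 1)).sigma fun b => Finset.Icc 1 (k (m + 2 - b))

/-- Entry of the skew block matrix `C_t` at row `a = ⟨α, i⟩`, column `b = ⟨β, j⟩`:
the `(α,β)`-th block of `C_t` is `(S_{m+2-β, m+1-β, α, t})ᵗ` whenever this Siegel matrix
is defined, the `(t+1, m+1-t)`-th block is the identity, and all other blocks are `0`.
Here `S_{u,u-1,y,z} = P_{u,u-1,y,z}`. -/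
def Centry {F : Type*} [Field F] (m : ℕ) (P : ℕ → ℕ → ℕ → ℕ → ℕ → ℕ → F)
    (t : ℕ) (a b : (_ : ℕ) × ℕ) : F :=
  if a.1 = t + 1 ∧ b.1 = m + 1 - t then (if a.2 = b.2 then 1 else 0)
  else if 2 ≤ b.1 ∧ m + 1 - t ≤ b.1 ∧ t + 1 ≤ m ∧ t + 2 ≤ a.1 then
    P (m + 2 - b.1) (m + 1 - b.1) a.1 t b.2 a.2
  else 0

/-- Entry of the skew block matrix `D_t` (denoted `C̄_t` in the paper) at row `a = ⟨α, i⟩`,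
column `b = ⟨β, j⟩`: for `t ≤ m-1` the `(α,β)`-th block is `-P_{α, m-1-t, m+2-β, m-β}`
for `β ≤ t+1` and `0` for `β > t+1`; `D_m` has the identity as `(1, m+1)`-th block and all
other blocks `0`. -/
def Dentry {F : Type*} [Field F] (m : ℕ) (P : ℕ → ℕ → ℕ → ℕ → ℕ → ℕ → F)
    (t : ℕ) (a b : (_ : ℕ) × ℕ) : F :=
  if t = m then (if a.1 = 1 ∧ b.1 = m + 1 ∧ a.2 = b.2 then 1 else 0)
  else if b.1 ≤ t + 1 then -P a.1 (m - 1 - t) (m + 2 - b.1) (m - b.1) a.2 b.2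
  else 0

/-- The matrix `B = Σ_{t=0}^{m} C_t N^t ∈ M_r(F[N])` (with `N` the polynomial variable). -/
noncomputable def Bmat {F : Type*} [Field F] (m : ℕ) (k : ℕ → ℕ)
    (P : ℕ → ℕ → ℕ → ℕ → ℕ → ℕ → F) :
    Matrix {p // p ∈ blockIdx m k} {p // p ∈ dualBlockIdx m k} (Polynomial F) :=
  Matrix.of fun a b =>
    ∑ t ∈ Finset.range (m + 1), Polynomial.C (Centry m P t a.1 b.1) * Polynomial.X ^ t

/-- The matrix `B̄ = Σ_{t=0}^{m} D_t N^t ∈ M_r(F[N])`. -/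
noncomputable def Bbarmat {F : Type*} [Field F] (m : ℕ) (k : ℕ → ℕ)
    (P : ℕ → ℕ → ℕ → ℕ → ℕ → ℕ → F) :
    Matrix {p // p ∈ blockIdx m k} {p // p ∈ dualBlockIdx m k} (Polynomial F) :=
  Matrix.of fun a b =>
    ∑ t ∈ Finset.range (m + 1), Polynomial.C (Dentry m P t a.1 b.1) * Polynomial.X ^ t

/-!
A column of skew block matrices `Y_0, …, Y_m` satisfies the first `m` coefficient equations of
`Bᵗ · Σ Y_i N^i ∈ N^m` exactly when each `Y_i(u)` with `u ≤ m - i` is a prescribed linear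
combination of entries `Y_{i'}(α)` with `α > u`. Hence a solution is determined, by downward
induction on `u`, by its entries in the block rows `u > m - i`.

The vectors `N^{m-1-i} l_{α,x}` solve the same equations in `V`: apply `N^{m-1-s}` to the relation
expressing `N^{u-1} l_{u,j}` in the basis. So does their image under every linear functional, and
each column of `B̄` is obtained in this way from a coordinate functional of the basis.
-/

theorem exists_linearMap_apply_eq_of_linearIndependent {K V W ι : Type*} [DivisionRing K]
    [AddCommGroup V] [Module K V] [AddCommGroup W] [Module K W] {v : ι → V}
    (hv : LinearIndependent K v) (w : ι → W) : ∃ φ : V →ₗ[K] W, ∀ i, φ (v i) = w i := by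
  obtain ⟨g, hg⟩ := (Finsupp.linearCombination K v).exists_leftInverse_of_injective
    (LinearMap.ker_eq_bot.2 hv)
  refine ⟨Finsupp.linearCombination K w ∘ₗ g, fun i => ?_⟩
  have hgi : g (v i) = Finsupp.single i 1 := by
    simpa using LinearMap.congr_fun hg (Finsupp.single i 1)
  simp [hgi]

section Recursion

variable {R M M' : Type*} [Ring R] [AddCommGroup M] [Module R M] [AddCommGroup M'] [Module R M']
  {m : ℕ} {k : ℕ → ℕ} {P : ℕ → ℕ → ℕ → ℕ → ℕ → ℕ → R} {Y Y' : ℕ → ((_ : ℕ) × ℕ) → M}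

/-- The contribution of the Siegel matrices `S_{v+1,v,α,t}` to the coefficient of `N^s` in row
`j` of block row `m+1-v` of `Bᵗ · Σ Y_i N^i`, where `Y_i` is a column with entries in a module. -/
def siegelTail (m : ℕ) (k : ℕ → ℕ) (P : ℕ → ℕ → ℕ → ℕ → ℕ → ℕ → R)
    (Y : ℕ → ((_ : ℕ) × ℕ) → M) (s v j : ℕ) : M :=
  ∑ t ∈ Finset.Icc v s, ∑ α ∈ Finset.Icc (t + 2) (m + 1), ∑ q ∈ Finset.Icc 1 (k α),
    P (v + 1) v α t j q • Y (s - t) ⟨α, q⟩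

/-- The columns `Y_0, …, Y_{m-1}` satisfy the equations expressing `Bᵗ · Σ Y_i N^i ≡ 0 mod N^m`,
solved for the entries which meet an identity block of `B`. Only the block rows `m+1-v` and the
coefficients `s` with `v ≤ s < m` occur. -/
def IsSiegelSolution (m : ℕ) (k : ℕ → ℕ) (P : ℕ → ℕ → ℕ → ℕ → ℕ → ℕ → R)
    (Y : ℕ → ((_ : ℕ) × ℕ) → M) : Prop :=
  ∀ s < m, ∀ v ≤ s, ∀ j ∈ Finset.Icc 1 (k (v + 1)),
    Y (s - v) ⟨v + 1, j⟩ = -siegelTail m k P Y s v j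

theorem mk_mem_blockIdx {α x : ℕ} :
    (⟨α, x⟩ : (_ : ℕ) × ℕ) ∈ blockIdx m k ↔ (1 ≤ α ∧ α ≤ m + 1) ∧ x ∈ Finset.Icc 1 (k α) := by
  simp only [blockIdx, Finset.mem_sigma, Finset.mem_Icc]

theorem mk_mem_dualBlockIdx {β j : ℕ} :
    (⟨β, j⟩ : (_ : ℕ) × ℕ) ∈ dualBlockIdx m k ↔
      (1 ≤ β ∧ β ≤ m + 1) ∧ j ∈ Finset.Icc 1 (k (m + 2 - β)) := by
  simp only [dualBlockIdx, Finset.mem_sigma, Finset.mem_Icc]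

theorem siegelTail_congr {s v j : ℕ}
    (h : ∀ i ≤ s - v, ∀ a ∈ blockIdx m k, v + 1 < a.1 → Y i a = Y' i a) :
    siegelTail m k P Y s v j = siegelTail m k P Y' s v j := by
  refine Finset.sum_congr rfl fun t ht => Finset.sum_congr rfl fun α hα =>
    Finset.sum_congr rfl fun q hq => ?_
  rw [Finset.mem_Icc] at ht hα
  rw [h (s - t) (by omega) ⟨α, q⟩ (mk_mem_blockIdx.2 ⟨by omega, hq⟩) (by simp only; omega)]

theorem map_siegelTail (φ : M →ₗ[R] M') (s v j : ℕ) :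
    φ (siegelTail m k P Y s v j) = siegelTail m k P (fun i a => φ (Y i a)) s v j := by
  simp only [siegelTail, map_sum, map_smul]

theorem IsSiegelSolution.map (hY : IsSiegelSolution m k P Y) (φ : M →ₗ[R] M') :
    IsSiegelSolution m k P fun i a => φ (Y i a) := by
  intro s hs v hv j hj
  simp only [← map_siegelTail, hY s hs v hv j hj, map_neg]

theorem IsSiegelSolution.congr (hY : IsSiegelSolution m k P Y)
    (h : ∀ i < m, ∀ a ∈ blockIdx m k, Y i a = Y' i a) : IsSiegelSolution m k P Y' := by
  intro s hs v hv j hj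
  rw [← h (s - v) (by omega) _ (mk_mem_blockIdx.2 ⟨by omega, hj⟩), hY s hs v hv j hj,
    siegelTail_congr fun i hi a ha _ => h i (by omega) a ha]

theorem IsSiegelSolution.eq_of_eq_lower_blocks
    (hY : IsSiegelSolution m k P Y) (hY' : IsSiegelSolution m k P Y')
    (h : ∀ i ≤ m, ∀ a ∈ blockIdx m k, m - i < a.1 → Y i a = Y' i a) :
    ∀ i ≤ m, ∀ a ∈ blockIdx m k, Y i a = Y' i a := by
  suffices ∀ d, ∀ i ≤ m, ∀ a ∈ blockIdx m k, m + 1 - a.1 = d → Y i a = Y' i a from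
    fun i hi a ha => this _ i hi a ha rfl
  intro d
  induction d using Nat.strong_induction_on with
  | _ d ih =>
    rintro i hi ⟨u, j⟩ ha rfl
    by_cases hu : m - i < u
    · exact h i hi _ ha hu
    obtain ⟨⟨hu1, hum⟩, hj⟩ := mk_mem_blockIdx.1 ha
    obtain ⟨v, rfl⟩ := Nat.exists_eq_add_of_le' hu1
    have tail_eq : siegelTail m k P Y (i + v) v j = siegelTail m k P Y' (i + v) v j :=
      siegelTail_congr fun i' hi' a' ha' hlt =>
        ih (m + 1 - a'.1) (by simp only; omega) i' (by omega) a' ha' rfl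
    have hYi := hY (i + v) (by omega) v (by omega) j hj
    have hYi' := hY' (i + v) (by omega) v (by omega) j hj
    rw [Nat.add_sub_cancel] at hYi hYi'
    rw [hYi, hYi', tail_eq]

end Recursion

section NilpotentEndomorphism

variable {F V : Type*} [Field F] [AddCommGroup V] [Module F V] {m : ℕ} {N : Module.End F V}
  {k : ℕ → ℕ} {l : ℕ → ℕ → V} {P : ℕ → ℕ → ℕ → ℕ → ℕ → ℕ → F}

theorem isSiegelSolution_pow_apply (hN : N ^ m = 0) (hP : SatisfiesP m k N l P) :
    IsSiegelSolution m k P fun i a => (N ^ (m - 1 - i)) (l a.1 a.2) := by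
  intro s hs v hv j hj
  have hshift (t : ℕ) (ht : t ≤ s) (x : V) :
      (N ^ (m - 1 - s)) ((N ^ t) x) = (N ^ (m - 1 - (s - t))) x := by
    rw [← Module.End.mul_apply, ← pow_add, show m - 1 - s + t = m - 1 - (s - t) by omega]
  have hvanish (t : ℕ) (ht : s < t) (x : V) : (N ^ (m - 1 - s)) ((N ^ t) x) = 0 := by
    rw [← Module.End.mul_apply, ← pow_add, pow_eq_zero_of_le (by omega) hN, LinearMap.zero_apply]
  have hrel := congrArg (N ^ (m - 1 - s)) (hP (v + 1) (Finset.mem_Icc.2 (by omega)) v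
    (Finset.mem_Icc.2 (by omega)) j hj)
  simp only [map_neg, map_sum, map_smul] at hrel
  refine (hshift v hv _).symm.trans (hrel.trans (congrArg Neg.neg (Eq.symm ?_)))
  refine Finset.sum_subset_zero_on_sdiff (Finset.Icc_subset_Icc le_rfl (by omega)) ?_ ?_
  · intro t ht
    simp only [Finset.mem_sdiff, Finset.mem_Icc] at ht
    simp only [hvanish t (by omega), smul_zero, Finset.sum_const_zero]
  · intro t ht
    simp only [hshift t (Finset.mem_Icc.1 ht).2]

theorem exists_dual_apply_pow_eq_Dentry
    (hli : LinearIndependent F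
      fun p : siegelIdxSet m k 0 => (N ^ p.val.1) (l p.val.2.1 p.val.2.2))
    (hP : SatisfiesP m k N l P) {b : (_ : ℕ) × ℕ} (hb : b ∈ dualBlockIdx m k) :
    ∃ φ : V →ₗ[F] F, ∀ i < m, ∀ a ∈ blockIdx m k,
      φ ((N ^ (m - 1 - i)) (l a.1 a.2)) = Dentry m P i a b := by
  obtain ⟨β, j⟩ := b
  obtain ⟨hβ, hj⟩ := mk_mem_dualBlockIdx.1 hb
  -- No index in `siegelIdxSet m k 0` satisfies the condition when `β = m + 1`, so then `φ` kills
  -- the basis; this matches the zero block column `m + 1` of `D_i` for `i < m`.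
  obtain ⟨φ, hφ⟩ := exists_linearMap_apply_eq_of_linearIndependent hli fun p =>
    if p.val.1 = m - β ∧ p.val.2.1 = m + 2 - β ∧ p.val.2.2 = j then (1 : F) else 0
  refine ⟨φ, ?_⟩
  rintro i hi ⟨α, x⟩ ha
  obtain ⟨hα, hx⟩ := mk_mem_blockIdx.1 ha
  have hcoord : ∀ z ∈ Finset.Icc (m - 1 - i) (m - 1), ∀ y ∈ Finset.Icc (z + 2) (m + 1),
      ∀ q ∈ Finset.Icc 1 (k y), φ ((N ^ z) (l y q)) =
        if z = m - β ∧ y = m + 2 - β ∧ q = j then 1 else 0 := by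
    intro z hz y hy q hq
    rw [Finset.mem_Icc] at hz hy hq
    exact hφ ⟨(z, y, q), by omega, hz.2, hy.1, hy.2, hq⟩
  calc
    φ ((N ^ (m - 1 - i)) (l α x))
      = -∑ z ∈ Finset.Icc (m - 1 - i) (m - 1), ∑ y ∈ Finset.Icc (z + 2) (m + 1),
          ∑ q ∈ Finset.Icc 1 (k y),
            P α (m - 1 - i) y z x q * if z = m - β ∧ y = m + 2 - β ∧ q = j then 1 else 0 := by
        rw [hP α (Finset.mem_Icc.2 hα) _ (Finset.mem_Icc.2 (by omega)) x hx]
        simp only [map_neg, map_sum, map_smul, smul_eq_mul]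
        congr 1
        exact Finset.sum_congr rfl fun z hz => Finset.sum_congr rfl fun y hy =>
          Finset.sum_congr rfl fun q hq => by rw [hcoord z hz y hy q hq]
    _ = -if β ≤ i + 1 then P α (m - 1 - i) (m + 2 - β) (m - β) x j else 0 := by
        simp only [ite_and, mul_ite, mul_one, mul_zero, Finset.sum_ite_irrel,
          Finset.sum_const_zero, Finset.sum_ite_eq', if_pos hj]
        simp only [Finset.mem_Icc]
        split_ifs <;> first | rfl | omega
    _ = Dentry m P i ⟨α, x⟩ ⟨β, j⟩ := by
        rw [Dentry, if_neg hi.ne, apply_ite Neg.neg, neg_zero]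

theorem isSiegelSolution_Dentry (hN : N ^ m = 0)
    (hli : LinearIndependent F
      fun p : siegelIdxSet m k 0 => (N ^ p.val.1) (l p.val.2.1 p.val.2.2))
    (hP : SatisfiesP m k N l P) {b : (_ : ℕ) × ℕ} (hb : b ∈ dualBlockIdx m k) :
    IsSiegelSolution m k P fun i a => Dentry m P i a b := by
  obtain ⟨φ, hφ⟩ := exists_dual_apply_pow_eq_Dentry hli hP hb
  exact ((isSiegelSolution_pow_apply hN hP).map φ).congr hφ

end NilpotentEndomorphism

section PolynomialMatrix

variable {F : Type*} [Field F] {m : ℕ} {k : ℕ → ℕ} {P : ℕ → ℕ → ℕ → ℕ → ℕ → ℕ → F}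

/-- The matrix `Σ_{i=0}^{m} Y_i N^i ∈ M_r(F[N])` of a sequence of skew block matrices. -/
noncomputable def skewBlockPolynomial (m : ℕ) (k : ℕ → ℕ)
    (Y : ℕ → ((_ : ℕ) × ℕ) → ((_ : ℕ) × ℕ) → F) :
    Matrix {p // p ∈ blockIdx m k} {p // p ∈ dualBlockIdx m k} (Polynomial F) :=
  Matrix.of fun a b => ∑ i ∈ Finset.range (m + 1), Polynomial.C (Y i a.1 b.1) * Polynomial.X ^ i

theorem coeff_skewBlockPolynomial {Y : ℕ → ((_ : ℕ) × ℕ) → ((_ : ℕ) × ℕ) → F} {n : ℕ}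
    (hn : n ≤ m) (a : {p // p ∈ blockIdx m k}) (b : {p // p ∈ dualBlockIdx m k}) :
    (skewBlockPolynomial m k Y a b).coeff n = Y n a b := by
  simp only [skewBlockPolynomial, Matrix.of_apply, Polynomial.finsetSum_coeff,
    Polynomial.coeff_C_mul_X_pow, Finset.sum_ite_eq, Finset.mem_range, Nat.lt_succ_of_le hn,
    if_true]

theorem coeff_transpose_Bmat_mul {Y : ℕ → ((_ : ℕ) × ℕ) → ((_ : ℕ) × ℕ) → F} {s : ℕ}
    (hs : s ≤ m) (c b : {p // p ∈ dualBlockIdx m k}) :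
    (((Bmat m k P)ᵀ * skewBlockPolynomial m k Y) c b).coeff s =
      ∑ t ∈ Finset.range (s + 1), ∑ a ∈ blockIdx m k, Centry m P t a c * Y (s - t) a b := by
  rw [Finset.sum_comm, ← Finset.sum_coe_sort, Matrix.mul_apply, Polynomial.finsetSum_coeff]
  refine Finset.sum_congr rfl fun a _ => ?_
  rw [Polynomial.coeff_mul, Finset.Nat.sum_antidiagonal_eq_sum_range_succ_mk]
  refine Finset.sum_congr rfl fun t ht => ?_
  rw [Finset.mem_range] at ht
  have hB : (Bmat m k P a c).coeff t = Centry m P t a c :=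
    coeff_skewBlockPolynomial (by omega) a c
  rw [Matrix.transpose_apply, hB, coeff_skewBlockPolynomial (by omega)]

theorem Centry_mk_sub {t v : ℕ} (ht : t < m) (hv : v < m) (α i j : ℕ) :
    Centry m P t ⟨α, i⟩ ⟨m + 1 - v, j⟩ =
      (if t = v then if α = v + 1 then if i = j then 1 else 0 else 0 else 0) +
        if v ≤ t then if t + 2 ≤ α then P (v + 1) v α t j i else 0 else 0 := by
  have hrow : m + 2 - (m + 1 - v) = v + 1 := by omega
  have hpow : m + 1 - (m + 1 - v) = v := by omega
  simp only [Centry, hrow, hpow]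
  grind

theorem sum_Centry_mul {t v j : ℕ} (ht : t < m) (hv : v < m) (hj : j ∈ Finset.Icc 1 (k (v + 1)))
    (y : ((_ : ℕ) × ℕ) → F) :
    ∑ a ∈ blockIdx m k, Centry m P t a ⟨m + 1 - v, j⟩ * y a =
      (if t = v then y ⟨v + 1, j⟩ else 0) +
        if v ≤ t then ∑ α ∈ Finset.Icc (t + 2) (m + 1), ∑ q ∈ Finset.Icc 1 (k α),
          P (v + 1) v α t j q * y ⟨α, q⟩ else 0 := by
  have hrows : (Finset.Icc 1 (m + 1)).filter (t + 2 ≤ ·) = Finset.Icc (t + 2) (m + 1) := by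
    ext α
    simp only [Finset.mem_filter, Finset.mem_Icc]
    omega
  have hv' : v + 1 ∈ Finset.Icc 1 (m + 1) := Finset.mem_Icc.2 (by omega)
  simp only [blockIdx, Finset.sum_sigma, Centry_mk_sub ht hv, add_mul, Finset.sum_add_distrib,
    ite_mul, one_mul, zero_mul, Finset.sum_ite_irrel, Finset.sum_const_zero, Finset.sum_ite_eq',
    hv', hj, if_true, ← hrows, Finset.sum_filter]

theorem sum_range_Centry_mul {s v j : ℕ} (hs : s < m) (hv : v ≤ s)
    (hj : j ∈ Finset.Icc 1 (k (v + 1))) (Y : ℕ → ((_ : ℕ) × ℕ) → F) :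
    ∑ t ∈ Finset.range (s + 1), ∑ a ∈ blockIdx m k,
        Centry m P t a ⟨m + 1 - v, j⟩ * Y (s - t) a =
      Y (s - v) ⟨v + 1, j⟩ + siegelTail m k P Y s v j := by
  have hcoeffs : (Finset.range (s + 1)).filter (v ≤ ·) = Finset.Icc v s := by
    ext t
    simp only [Finset.mem_filter, Finset.mem_range, Finset.mem_Icc]
    omega
  rw [Finset.sum_congr rfl fun t ht =>
      sum_Centry_mul (by rw [Finset.mem_range] at ht; omega) (by omega) hj (Y (s - t)),
    Finset.sum_add_distrib, Finset.sum_ite_eq', if_pos (Finset.mem_range.2 (by omega)),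
    ← Finset.sum_filter, hcoeffs]
  rfl

theorem isSiegelSolution_of_X_pow_dvd {Y : ℕ → ((_ : ℕ) × ℕ) → ((_ : ℕ) × ℕ) → F}
    (hdvd : ∀ c b : {p // p ∈ dualBlockIdx m k},
      (Polynomial.X : Polynomial F) ^ m ∣ ((Bmat m k P)ᵀ * skewBlockPolynomial m k Y) c b)
    {b : (_ : ℕ) × ℕ} (hb : b ∈ dualBlockIdx m k) :
    IsSiegelSolution m k P fun i a => Y i a b := by
  intro s hs v hv j hj
  have hc : (⟨m + 1 - v, j⟩ : (_ : ℕ) × ℕ) ∈ dualBlockIdx m k := by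
    rw [mk_mem_dualBlockIdx, show m + 2 - (m + 1 - v) = v + 1 by omega]
    exact ⟨by omega, hj⟩
  rw [eq_neg_iff_add_eq_zero, ← sum_range_Centry_mul hs hv hj fun i a => Y i a b,
    ← coeff_transpose_Bmat_mul hs.le ⟨_, hc⟩ ⟨b, hb⟩]
  exact Polynomial.X_pow_dvd_iff.1 (hdvd _ _) s hs

end PolynomialMatrix

theorem stmt_1_general {F : Type*} [Field F] {V : Type*} [AddCommGroup V] [Module F V]
    (m : ℕ) (N : Module.End F V) (hN : N ^ m = 0) (k : ℕ → ℕ) (l : ℕ → ℕ → V)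
    (hli : LinearIndependent F
      fun p : siegelIdxSet m k 0 => (N ^ p.val.1) (l p.val.2.1 p.val.2.2))
    (P : ℕ → ℕ → ℕ → ℕ → ℕ → ℕ → F) (hP : SatisfiesP m k N l P)
    (Xm : ℕ → ((_ : ℕ) × ℕ) → ((_ : ℕ) × ℕ) → F)
    (hXm : ∀ i ≤ m, ∀ a ∈ blockIdx m k, ∀ b ∈ dualBlockIdx m k,
      m - i < a.1 → Xm i a b = Dentry m P i a b)
    (hdvd : ∀ c b : {p // p ∈ dualBlockIdx m k},
      (Polynomial.X : Polynomial F) ^ m ∣ ((Bmat m k P)ᵀ * skewBlockPolynomial m k Xm) c b) :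
    skewBlockPolynomial m k Xm = Bbarmat m k P := by
  ext1 a b
  have hX := isSiegelSolution_of_X_pow_dvd hdvd b.2
  have hD := isSiegelSolution_Dentry hN hli hP b.2
  have hXD := hX.eq_of_eq_lower_blocks hD fun i hi a ha => hXm i hi a ha b.1 b.2
  simp only [skewBlockPolynomial, Bbarmat, Matrix.of_apply]
  refine Finset.sum_congr rfl fun i hi => ?_
  rw [hXD i (Nat.lt_succ_iff.1 (Finset.mem_range.1 hi)) a.1 a.2]

/-- Lemma 3.33 of the paper: if `X_0, …, X_m` are skew block matrices
agreeing with `D_i = C̄_i` on all blocks `(α,β)` with `α > m-i` or `β > i+1`, and if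
`Bᵗ ⬝ (Σ_i X_i N^i) ∈ N^m M_r(F[N])`, then `Σ_i X_i N^i = B̄`. -/
theorem stmt_1 {F : Type*} [Field F] {V : Type*} [AddCommGroup V] [Module F V]
    [FiniteDimensional F V]
    (m : ℕ) (hm : 1 ≤ m) (N : Module.End F V) (hN : N ^ m = 0)
    (k : ℕ → ℕ) (l : ℕ → ℕ → V) (hbasis : IsSiegelBasis F m k N l)
    (P : ℕ → ℕ → ℕ → ℕ → ℕ → ℕ → F) (hP : SatisfiesP m k N l P)
    (Xm : ℕ → ((_ : ℕ) × ℕ) → ((_ : ℕ) × ℕ) → F)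
    (hXm : ∀ i ≤ m, ∀ a ∈ blockIdx m k, ∀ b ∈ dualBlockIdx m k,
      (m - i < a.1 ∨ i + 1 < b.1) → Xm i a b = Dentry m P i a b)
    (hdvd : ∀ (a b : {p // p ∈ dualBlockIdx m k}),
      (Polynomial.X : Polynomial F) ^ m ∣
        (((Bmat m k P)ᵀ *
          Matrix.of (fun (a : {p // p ∈ blockIdx m k}) (b : {p // p ∈ dualBlockIdx m k}) =>
            ∑ i ∈ Finset.range (m + 1), Polynomial.C (Xm i a.1 b.1) * Polynomial.X ^ i) :
          Matrix {p // p ∈ dualBlockIdx m k} {p // p ∈ dualBlockIdx m k} (Polynomial F)) a b)) :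
    (Matrix.of (fun (a : {p // p ∈ blockIdx m k}) (b : {p // p ∈ dualBlockIdx m k}) =>
        ∑ i ∈ Finset.range (m + 1), Polynomial.C (Xm i a.1 b.1) * Polynomial.X ^ i)) =
      Bbarmat m k P :=
  stmt_1_general m N hN k l (hbasis 0 hm).1 P hP Xm
    (fun i hi a ha b hb h => hXm i hi a ha b hb (Or.inl h)) hdvd
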